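/- Let S be a nonempty finite set, let d : S → ℝ with d_s ≠ 0 for all s ∈ S, and for each s ∈ S let P_s be a 2^n × 2^n complex matrix that is a Kronecker product of n matrices each belonging to {I₂, X, Z}. Let σ be a density matrix of size 2^n × 2^n, let H = Σ_{s∈S} d_s·P_s, let D = Σ_{s∈S} |d_s|, and let b ∈ ℝ. If Re Tr(H σ) ≥ b, then Σ_{s∈S} (|d_s|/D) · (1 − sign(d_s)·Re Tr(P_s σ))/2 ≤ 1/2 − b/(2D). (In a no-instance of the 2-local XZ Hamiltonian problem, the per-round probability that the prover's measurement outcome equals −sign(d_s) is at most 1/2 − b/(2·Σ_s|d_s|), for any witness state sent by the prover.) -/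

import Mathlib

open Matrix BigOperators
open scoped ComplexOrder

noncomputable def pauliX : Matrix (Fin 2) (Fin 2) ℂ := !![0, 1; 1, 0]
noncomputable def pauliZ : Matrix (Fin 2) (Fin 2) ℂ := !![1, 0; 0, -1]

/-- The Kronecker product of a family of `n` 2×2 matrices, as a `2^n × 2^n` matrix
whose rows and columns are indexed by bit strings of length `n`. -/
noncomputable def kronPowFam {n : ℕ} (M : Fin n → Matrix (Fin 2) (Fin 2) ℂ) :
    Matrix (Fin n → Fin 2) (Fin n → Fin 2) ℂ :=
  Matrix.of fun x y => ∏ i, M i (x i) (y i)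

/-! Since `|d s| * sign (d s) = d s`, averaging `sign (d s) * E (P s)` with the weights `|d s| / D`
turns it into the energy `E H / D`, for any real-linear functional `E`. The weighted probability is
therefore exactly `1 / 2 - E H / (2 * D)`, which is antitone in the energy. -/

/-- The expectation value `Re Tr(P σ)` of an observable `P` in the state `σ`, as a real-linear
functional of `P`, so that the energy of a weighted sum of observables is the weighted sum of their
expectation values. -/
noncomputable def expectationValue {m : Type*} [Fintype m] (σ : Matrix m m ℂ) :
    Matrix m m ℂ →ₗ[ℝ] ℝ :=
  Complex.reLm ∘ₗ traceLinearMap m ℝ ℂ ∘ₗ LinearMap.mulRight ℝ σ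

theorem abs_mul_real_sign (x : ℝ) : |x| * Real.sign x = x := by
  obtain hx | rfl | hx := lt_trichotomy x 0
  · rw [abs_of_neg hx, Real.sign_of_neg hx, neg_mul_neg, mul_one]
  · rw [abs_zero, zero_mul]
  · rw [abs_of_pos hx, Real.sign_of_pos hx, mul_one]

theorem sum_abs_pos_of_ne_zero {S α : Type*} [Fintype S] [AddCommGroup α] [LinearOrder α]
    [IsOrderedAddMonoid α] {d : S → α} (hd : d ≠ 0) : 0 < ∑ s, |d s| := by
  obtain ⟨s, hs⟩ := Function.ne_iff.mp hd
  exact Finset.sum_pos' (fun t _ => abs_nonneg (d t)) ⟨s, Finset.mem_univ s, abs_pos.mpr hs⟩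

theorem sum_abs_div_mul_one_sub_sign_mul_div_two {S : Type*} (I : Finset S) (d e : S → ℝ)
    (hd : ∑ s ∈ I, |d s| ≠ 0) :
    ∑ s ∈ I, (|d s| / ∑ t ∈ I, |d t|) * ((1 - Real.sign (d s) * e s) / 2)
      = 1 / 2 - (∑ s ∈ I, d s * e s) / (2 * ∑ s ∈ I, |d s|) := by
  set D := ∑ s ∈ I, |d s|
  calc ∑ s ∈ I, (|d s| / D) * ((1 - Real.sign (d s) * e s) / 2)
      = ∑ s ∈ I, (|d s| - d s * e s) / (2 * D) := by
        refine Finset.sum_congr rfl fun s _ => ?_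
        rw [div_mul_div_comm, mul_comm D 2, mul_sub, mul_one, ← mul_assoc, abs_mul_real_sign]
    _ = (D - ∑ s ∈ I, d s * e s) / (2 * D) := by
        rw [← Finset.sum_div, Finset.sum_sub_distrib]
    _ = 1 / 2 - (∑ s ∈ I, d s * e s) / (2 * D) := by
        rw [sub_div, div_mul_cancel_right₀ hd, one_div]

theorem stmt2_general {S V : Type*} [Fintype S] [AddCommMonoid V] [Module ℝ V]
    (E : V →ₗ[ℝ] ℝ) (d : S → ℝ) (hd : d ≠ 0) (P : S → V)
    (H : V) (hH : H = ∑ s, d s • P s)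
    (D : ℝ) (hD : D = ∑ s, |d s|) (b : ℝ) (hb : b ≤ E H) :
    ∑ s, (|d s| / D) * ((1 - Real.sign (d s) * E (P s)) / 2) ≤ 1 / 2 - b / (2 * D) := by
  have hD_pos : 0 < D := hD ▸ sum_abs_pos_of_ne_zero hd
  have energy : E H = ∑ s, d s * E (P s) := by
    simp only [hH, map_sum, map_smul, smul_eq_mul]
  calc ∑ s, (|d s| / D) * ((1 - Real.sign (d s) * E (P s)) / 2)
      = 1 / 2 - E H / (2 * D) := by
        rw [energy, hD]
        exact sum_abs_div_mul_one_sub_sign_mul_div_two _ d _ (hD ▸ hD_pos.ne')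
    _ ≤ 1 / 2 - b / (2 * D) := by gcongr

theorem stmt2 {S : Type*} [Fintype S] [Nonempty S] (n : ℕ)
    (d : S → ℝ) (hd : ∀ s, d s ≠ 0)
    (P : S → Matrix (Fin n → Fin 2) (Fin n → Fin 2) ℂ)
    (hP : ∀ s, ∃ M : Fin n → Matrix (Fin 2) (Fin 2) ℂ,
      (∀ i, M i = 1 ∨ M i = pauliX ∨ M i = pauliZ) ∧ P s = kronPowFam M)
    (σ : Matrix (Fin n → Fin 2) (Fin n → Fin 2) ℂ)
    (hσ : σ.PosSemidef) (hσtr : σ.trace = 1)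
    (H : Matrix (Fin n → Fin 2) (Fin n → Fin 2) ℂ)
    (hH : H = ∑ s, (d s : ℂ) • P s)
    (D : ℝ) (hD : D = ∑ s, |d s|) (b : ℝ)
    (hb : b ≤ ((H * σ).trace).re) :
    ∑ s, (|d s| / D) * ((1 - Real.sign (d s) * ((P s * σ).trace).re) / 2)
      ≤ 1 / 2 - b / (2 * D) :=
  stmt2_general (expectationValue σ) d (Function.ne_iff.mpr ⟨Classical.arbitrary S, hd _⟩) P H
    (by simpa only [Complex.coe_smul] using hH) D hD b hb
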